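/- (Sudakov–Fernique inequality) Let (X_t)_{t∈T} and (Y_t)_{t∈T} be mean-zero Gaussian processes on a finite index set T satisfying E[(X_t − X_s)²] ≤ E[(Y_t − Y_s)²] for all t, s ∈ T. Then E[sup_{t∈T} X_t] ≤ E[sup_{t∈T} Y_t]. -/

import Mathlib

open MeasureTheory ProbabilityTheory
open scoped NNReal

/-- A family of real random variables is a mean-zero (jointly) Gaussian process if every
finite linear combination has a centered Gaussian distribution. -/
def IsCenteredGaussianProcess {Ω : Type*} [MeasurableSpace Ω] (P : Measure Ω)
    {T : Type*} [Fintype T] (X : T → Ω → ℝ) : Prop :=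
  ∀ c : T → ℝ, ∃ v : ℝ≥0, P.map (fun ω => ∑ t, c t * X t ω) = gaussianReal 0 v

/-!
Let `X` and `Y` be independent centered Gaussian vectors and put `Z θ = cos θ • X + sin θ • Y`,
which moves from `X` to `Y` as `θ` runs over `[0, π / 2]`. Gaussian integration by parts turns the
derivative of `E[f (Z θ)]` into
`sin θ * cos θ * ∑ i, ∑ j, (cov (Y i) (Y j) - cov (X i) (X j)) * E[∂ᵢ∂ⱼ f (Z θ)]`.
For `f` the log-sum-exp function at inverse temperature `β`, with gradient `w`, the Hessian is
`β (diag w - w wᵀ)`; since `∑ i, w i = 1`, pairing it with the covariance difference gives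
`β / 2 * ∑ i, ∑ j, w i * w j * (Var (Y i - Y j) - Var (X i - X j)) ≥ 0`. As `β → ∞`, log-sum-exp
converges uniformly to the maximum.
-/

theorem hasDerivAt_gaussianPDFReal (m : ℝ) (v : ℝ≥0) (x : ℝ) :
    HasDerivAt (gaussianPDFReal m v) (-((x - m) / v) * gaussianPDFReal m v x) x := by
  have hexponent : HasDerivAt (fun y : ℝ ↦ -(y - m) ^ 2 / (2 * v)) (-((x - m) / v)) x := by
    refine ((((hasDerivAt_id x).sub_const m).pow 2).neg.div_const (2 * (v : ℝ))).congr_deriv ?_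
    simp only [id, Nat.cast_ofNat, Nat.add_one_sub_one, pow_one, mul_one, neg_div]
    rw [mul_div_mul_left _ _ two_ne_zero]
  rw [gaussianPDFReal_def]
  exact (hexponent.exp.const_mul _).congr_deriv (by ring)

theorem integrable_gaussianPDFReal_mul {m : ℝ} {v : ℝ≥0} {h : ℝ → ℝ} (hv : v ≠ 0)
    (hh : Integrable h (gaussianReal m v)) : Integrable (fun x ↦ gaussianPDFReal m v x * h x) := by
  rw [gaussianReal_of_var_ne_zero m hv, integrable_withDensity_iff_integrable_smul₀'
    (measurable_gaussianPDF m v).aemeasurable (ae_of_all _ fun _ ↦ gaussianPDF_lt_top)] at hh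
  simpa only [toReal_gaussianPDF, smul_eq_mul] using hh

theorem integral_sub_mul_gaussianReal {m : ℝ} {v : ℝ≥0} {h h' : ℝ → ℝ}
    (hderiv : ∀ x, HasDerivAt h (h' x) x) (hint : Integrable h (gaussianReal m v))
    (hint' : Integrable h' (gaussianReal m v))
    (hint_mul : Integrable (fun x ↦ (x - m) * h x) (gaussianReal m v)) :
    ∫ x, (x - m) * h x ∂gaussianReal m v = v * ∫ x, h' x ∂gaussianReal m v := by
  rcases eq_or_ne v 0 with rfl | hv
  · simp
  have hscore : ∀ x, h x * (-((x - m) / v) * gaussianPDFReal m v x)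
      = -(v : ℝ)⁻¹ * (gaussianPDFReal m v x * ((x - m) * h x)) := fun x ↦ by ring
  have hparts := integral_mul_deriv_eq_deriv_mul_of_integrable
    (fun x _ ↦ hderiv x) (fun x _ ↦ hasDerivAt_gaussianPDFReal m v x)
    (((integrable_gaussianPDFReal_mul hv hint_mul).const_mul (-(v : ℝ)⁻¹)).congr
      (ae_of_all _ fun x ↦ (hscore x).symm))
    ((integrable_gaussianPDFReal_mul hv hint').congr (ae_of_all _ fun _ ↦ mul_comm _ _))
    ((integrable_gaussianPDFReal_mul hv hint).congr (ae_of_all _ fun _ ↦ mul_comm _ _))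
  simp only [hscore, integral_const_mul, mul_comm (h' _)] at hparts
  simp only [integral_gaussianReal_eq_integral_smul hv, smul_eq_mul]
  have hv' : (v : ℝ) ≠ 0 := NNReal.coe_ne_zero.2 hv
  rw [neg_mul, neg_inj, inv_mul_eq_iff_eq_mul₀ hv'] at hparts
  exact hparts

section LineDeriv

variable {E : Type*} [NormedAddCommGroup E] [NormedSpace ℝ E] {g g' : E → ℝ} {k : E}

theorem hasDerivAt_comp_add_smul (hderiv : ∀ x, HasLineDerivAt ℝ g (g' x) x k) (r : E) (s : ℝ) :
    HasDerivAt (fun s ↦ g (r + s • k)) (g' (r + s • k)) s := by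
  have hshift : HasDerivAt (fun t ↦ g (r + s • k + t • k)) (g' (r + s • k)) (s - s) := by
    rw [sub_self]
    exact hderiv (r + s • k)
  simpa only [add_assoc, ← add_smul, add_sub_cancel] using hshift.comp_sub_const s s

theorem integral_sub_mul_comp_add_smul_gaussianReal {m : ℝ} {v : ℝ≥0} (hv : v ≠ 0)
    (hderiv : ∀ x, HasLineDerivAt ℝ g (g' x) x k) (r : E)
    (hint : Integrable (fun s : ℝ ↦ g (r + (s / v) • k)) (gaussianReal m v))
    (hint' : Integrable (fun s : ℝ ↦ g' (r + (s / v) • k)) (gaussianReal m v))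
    (hint_mul : Integrable (fun s : ℝ ↦ (s - m) * g (r + (s / v) • k)) (gaussianReal m v)) :
    ∫ s, (s - m) * g (r + (s / v) • k) ∂gaussianReal m v
      = ∫ s, g' (r + (s / v) • k) ∂gaussianReal m v := by
  have hline (s : ℝ) :
      HasDerivAt (fun s : ℝ ↦ g (r + (s / v) • k)) (g' (r + (s / v) • k) / v) s := by
    rw [← mul_one_div]
    exact (hasDerivAt_comp_add_smul hderiv r (s / v)).comp s ((hasDerivAt_id s).div_const (v : ℝ))
  rw [integral_sub_mul_gaussianReal hline hint (hint'.div_const _) hint_mul, integral_div,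
    mul_div_cancel₀ _ (NNReal.coe_ne_zero.2 hv)]

end LineDeriv

section IndepFun

variable {Ω S R : Type*} {mΩ : MeasurableSpace Ω} [MeasurableSpace S] [MeasurableSpace R]
  {P : Measure Ω} [IsFiniteMeasure P] {ξ : Ω → S} {ρ : Ω → R} {F : S × R → ℝ}

theorem integrable_prod_map_of_indepFun (hξρ : ξ ⟂ᵢ[P] ρ) (hξ : AEMeasurable ξ P)
    (hρ : AEMeasurable ρ P) (hF : Measurable F) (hFint : Integrable (fun ω ↦ F (ξ ω, ρ ω)) P) :
    Integrable F ((P.map ξ).prod (P.map ρ)) := by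
  rwa [← (indepFun_iff_map_prod_eq_prod_map_map hξ hρ).1 hξρ,
    integrable_map_measure hF.aestronglyMeasurable (hξ.prodMk hρ)]

theorem integral_comp_prodMk_of_indepFun (hξρ : ξ ⟂ᵢ[P] ρ) (hξ : AEMeasurable ξ P)
    (hρ : AEMeasurable ρ P) (hF : Measurable F) (hFint : Integrable (fun ω ↦ F (ξ ω, ρ ω)) P) :
    ∫ ω, F (ξ ω, ρ ω) ∂P = ∫ r, ∫ s, F (s, r) ∂P.map ξ ∂P.map ρ := by
  rw [← integral_prod_symm _ (integrable_prod_map_of_indepFun hξρ hξ hρ hF hFint),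
    ← (indepFun_iff_map_prod_eq_prod_map_map hξ hρ).1 hξρ,
    integral_map (hξ.prodMk hρ) hF.aestronglyMeasurable]

end IndepFun

section GaussianVector

variable {Ω E : Type*} {mΩ : MeasurableSpace Ω} {P : Measure Ω}
  [NormedAddCommGroup E] [NormedSpace ℝ E] [MeasurableSpace E] [BorelSpace E] [CompleteSpace E]
  [SecondCountableTopology E] {ξ : Ω → ℝ} {Z : Ω → E} {k : E}

theorem indepFun_sub_smul_of_hasGaussianLaw (hξZ : HasGaussianLaw (fun ω ↦ (ξ ω, Z ω)) P)
    (hk : ∀ L : StrongDual ℝ E, cov[ξ, fun ω ↦ L (Z ω); P] = L k) (hξ : Var[ξ; P] ≠ 0) :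
    ξ ⟂ᵢ[P] fun ω ↦ Z ω - (ξ ω / Var[ξ; P]) • k := by
  let residual : ℝ × E →L[ℝ] ℝ × E := (ContinuousLinearMap.fst ℝ ℝ E).prod
    (.snd ℝ ℝ E - (Var[ξ; P])⁻¹ • (ContinuousLinearMap.fst ℝ ℝ E).smulRight k)
  have hresidual : ∀ ω, residual (ξ ω, Z ω) = (ξ ω, Z ω - (ξ ω / Var[ξ; P]) • k) := fun ω ↦ by
    simp [residual, smul_smul, div_eq_inv_mul]
  have hjoint := hξZ.map_fun residual
  simp only [hresidual] at hjoint
  have := hjoint.isProbabilityMeasure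
  refine hjoint.indepFun_of_covariance_strongDual fun L₁ L₂ ↦ ?_
  have hL₁ : L₁ ∘ ξ = fun ω ↦ L₁ 1 * ξ ω := by
    ext ω
    simpa [mul_comm] using L₁.map_smul (ξ ω) 1
  have hL₂ : L₂ ∘ (fun ω ↦ Z ω - (ξ ω / Var[ξ; P]) • k)
      = fun ω ↦ L₂ (Z ω) - L₂ k / Var[ξ; P] * ξ ω := by
    ext ω
    rw [Function.comp_apply, map_sub, map_smul, smul_eq_mul]
    ring
  rw [hL₁, hL₂, covariance_const_mul_left, covariance_fun_sub_right hξZ.fst.memLp_two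
    (hξZ.snd.map_fun L₂).memLp_two (hξZ.fst.memLp_two.const_mul _), covariance_const_mul_right,
    covariance_self hξZ.fst.aemeasurable, hk, div_mul_cancel₀ _ hξ, sub_self, mul_zero]

-- The residual `Z - (ξ / Var ξ) • k` of the regression on `ξ` is independent of `ξ`; once it is
-- fixed, `Z` moves along a line of direction `k` and the one-dimensional identity applies.
theorem integral_sub_mul_comp_of_variance_ne_zero (hξZ : HasGaussianLaw (fun ω ↦ (ξ ω, Z ω)) P)
    (hk : ∀ L : StrongDual ℝ E, cov[ξ, fun ω ↦ L (Z ω); P] = L k) (hξ : Var[ξ; P] ≠ 0)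
    {g g' : E → ℝ} (hderiv : ∀ x, HasLineDerivAt ℝ g (g' x) x k)
    (hg : Measurable g) (hg' : Measurable g')
    (hint : Integrable (fun ω ↦ g (Z ω)) P) (hint' : Integrable (fun ω ↦ g' (Z ω)) P)
    (hint_mul : Integrable (fun ω ↦ (ξ ω - P[ξ]) * g (Z ω)) P) :
    ∫ ω, (ξ ω - P[ξ]) * g (Z ω) ∂P = ∫ ω, g' (Z ω) ∂P := by
  have := hξZ.isProbabilityMeasure
  set m := P[ξ]
  obtain ⟨v, hv⟩ : ∃ v : ℝ≥0, (v : ℝ) = Var[ξ; P] := ⟨⟨_, variance_nonneg ξ P⟩, rfl⟩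
  have hv₀ : v ≠ 0 := by rwa [← NNReal.coe_ne_zero, hv]
  have hlaw : P.map ξ = gaussianReal m v := by
    rw [hξZ.fst.map_eq_gaussianReal, ← hv, Real.toNNReal_coe]
  set ρ : Ω → E := fun ω ↦ Z ω - (ξ ω / v) • k
  have hZ (ω : Ω) : Z ω = ρ ω + (ξ ω / v) • k := (sub_add_cancel _ _).symm
  have hindep : ξ ⟂ᵢ[P] ρ := by
    simpa only [ρ, hv] using indepFun_sub_smul_of_hasGaussianLaw hξZ hk hξ
  have hξm : AEMeasurable ξ P := hξZ.fst.aemeasurable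
  have hρm : AEMeasurable ρ P := hξZ.snd.aemeasurable.sub ((hξm.div_const _).smul_const k)
  let F (p : ℝ × E) : ℝ := g (p.2 + (p.1 / v) • k)
  let F' (p : ℝ × E) : ℝ := g' (p.2 + (p.1 / v) • k)
  let G (p : ℝ × E) : ℝ := (p.1 - m) * F p
  have hF : Measurable F := hg.comp (by fun_prop)
  have hF' : Measurable F' := hg'.comp (by fun_prop)
  have hG : Measurable G := (measurable_fst.sub_const m).mul hF
  simp only [hZ] at hint hint' hint_mul ⊢
  calc ∫ ω, G (ξ ω, ρ ω) ∂P
      = ∫ r, ∫ s, G (s, r) ∂P.map ξ ∂P.map ρ :=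
        integral_comp_prodMk_of_indepFun hindep hξm hρm hG hint_mul
    _ = ∫ r, ∫ s, F' (s, r) ∂P.map ξ ∂P.map ρ := by
        refine integral_congr_ae ?_
        filter_upwards [(integrable_prod_map_of_indepFun hindep hξm hρm hF hint).prod_left_ae,
          (integrable_prod_map_of_indepFun hindep hξm hρm hF' hint').prod_left_ae,
          (integrable_prod_map_of_indepFun hindep hξm hρm hG hint_mul).prod_left_ae]
          with r hr hr' hr_mul
        rw [hlaw] at hr hr' hr_mul ⊢
        exact integral_sub_mul_comp_add_smul_gaussianReal hv₀ hderiv r hr hr' hr_mul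
    _ = ∫ ω, F' (ξ ω, ρ ω) ∂P :=
        (integral_comp_prodMk_of_indepFun hindep hξm hρm hF' hint').symm

theorem integral_sub_mul_comp (hξZ : HasGaussianLaw (fun ω ↦ (ξ ω, Z ω)) P)
    (hk : ∀ L : StrongDual ℝ E, cov[ξ, fun ω ↦ L (Z ω); P] = L k)
    {g g' : E → ℝ} (hderiv : ∀ x, HasLineDerivAt ℝ g (g' x) x k)
    (hg : Measurable g) (hg' : Measurable g')
    (hint : Integrable (fun ω ↦ g (Z ω)) P) (hint' : Integrable (fun ω ↦ g' (Z ω)) P)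
    (hint_mul : Integrable (fun ω ↦ (ξ ω - P[ξ]) * g (Z ω)) P) :
    ∫ ω, (ξ ω - P[ξ]) * g (Z ω) ∂P = ∫ ω, g' (Z ω) ∂P := by
  have := hξZ.isProbabilityMeasure
  by_cases hξ : Var[ξ; P] = 0
  · have hconst : ξ =ᵐ[P] fun _ ↦ P[ξ] :=
      ae_eq_integral_of_variance_eq_zero hξZ.fst.memLp_two hξ
    have hk₀ : k = 0 := SeparatingDual.eq_zero_of_forall_dual_eq_zero (R := ℝ) fun L ↦ by
      have hcenter : (fun ω ↦ (ξ ω - P[ξ]) * (L (Z ω) - ∫ ω, L (Z ω) ∂P)) =ᵐ[P] 0 := by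
        filter_upwards [hconst] with ω hω
        simp [hω]
      rw [← hk, covariance, integral_congr_ae hcenter]
      exact integral_zero _ _
    have hg'₀ (x : E) : g' x = 0 := (hderiv x).unique (hk₀ ▸ hasLineDerivAt_zero)
    simp only [hg'₀, integral_zero]
    refine integral_eq_zero_of_ae (hconst.mono fun ω hω ↦ ?_)
    simp [hω]
  · exact integral_sub_mul_comp_of_variance_ne_zero hξZ hk hξ hderiv hg hg' hint hint' hint_mul

end GaussianVector

section Rotation

variable {Ω E : Type*} {mΩ : MeasurableSpace Ω} {P : Measure Ω} [NormedAddCommGroup E]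
  [NormedSpace ℝ E] {f : E → ℝ} {f' : E → StrongDual ℝ E} {C : ℝ} {X Y : Ω → E}

open ContinuousLinearMap (rotation)

theorem hasDerivAt_fst_rotation (p : E × E) (θ : ℝ) :
    HasDerivAt (fun θ ↦ (rotation θ p).1) (rotation θ p).2 θ := by
  simp only [ContinuousLinearMap.rotation_apply]
  exact ((Real.hasDerivAt_cos θ).smul_const p.1).add ((Real.hasDerivAt_sin θ).smul_const p.2)

theorem norm_snd_rotation_le (p : E × E) (θ : ℝ) : ‖(rotation θ p).2‖ ≤ ‖p.1‖ + ‖p.2‖ := by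
  rw [ContinuousLinearMap.rotation_apply]
  refine (norm_add_le _ _).trans (add_le_add ?_ ?_)
  · rw [neg_smul, norm_neg, norm_smul, Real.norm_eq_abs]
    exact mul_le_of_le_one_left (norm_nonneg _) (Real.abs_sin_le_one θ)
  · rw [norm_smul, Real.norm_eq_abs]
    exact mul_le_of_le_one_left (norm_nonneg _) (Real.abs_cos_le_one θ)

theorem integrable_comp_of_hasFDerivAt [IsFiniteMeasure P] (hf : ∀ x, HasFDerivAt f (f' x) x)
    (hC : ∀ x, ‖f' x‖ ≤ C) (hX : Integrable X P) : Integrable (fun ω ↦ f (X ω)) P := by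
  have hcont : Continuous f := continuous_iff_continuousAt.2 fun x ↦ (hf x).continuousAt
  refine (((hX.norm.const_mul C).add (integrable_const |f 0|))).mono'
    (hcont.comp_aestronglyMeasurable hX.aestronglyMeasurable) (ae_of_all _ fun ω ↦ ?_)
  have hlip : ‖f (X ω) - f 0‖ ≤ C * ‖X ω - 0‖ :=
    convex_univ.norm_image_sub_le_of_norm_hasFDerivWithin_le
      (fun x _ ↦ (hf x).hasFDerivWithinAt) (fun x _ ↦ hC x) (Set.mem_univ 0) (Set.mem_univ (X ω))
  rw [sub_zero] at hlip
  exact (norm_le_norm_sub_add _ _).trans (add_le_add_left hlip _)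

theorem hasDerivAt_integral_comp_rotation [IsFiniteMeasure P] (hf : ∀ x, HasFDerivAt f (f' x) x)
    (hf' : Continuous f') (hC : ∀ x, ‖f' x‖ ≤ C) (hX : Integrable X P) (hY : Integrable Y P)
    (θ : ℝ) :
    HasDerivAt (fun θ ↦ ∫ ω, f (rotation θ (X ω, Y ω)).1 ∂P)
      (∫ ω, f' (rotation θ (X ω, Y ω)).1 (rotation θ (X ω, Y ω)).2 ∂P) θ := by
  have hXY : Integrable (fun ω ↦ (X ω, Y ω)) P := hX.prodMk hY
  have hrot (θ : ℝ) : Integrable (fun ω ↦ rotation θ (X ω, Y ω)) P :=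
    (rotation θ).integrable_comp hXY
  have hint (θ : ℝ) : Integrable (fun ω ↦ f (rotation θ (X ω, Y ω)).1) P :=
    integrable_comp_of_hasFDerivAt hf hC (hrot θ).fst
  refine (hasDerivAt_integral_of_dominated_loc_of_deriv_le (bound := fun ω ↦ C * (‖X ω‖ + ‖Y ω‖))
    (F' := fun θ ω ↦ f' (rotation θ (X ω, Y ω)).1 (rotation θ (X ω, Y ω)).2) Filter.univ_mem
    (.of_forall fun θ ↦ (hint θ).aestronglyMeasurable) (hint θ) ?_ (ae_of_all _ fun ω θ _ ↦ ?_)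
    ((hX.norm.add hY.norm).const_mul C) (ae_of_all _ fun ω θ _ ↦ ?_)).2
  · exact isBoundedBilinearMap_apply.continuous.comp_aestronglyMeasurable
      ((hf'.comp_aestronglyMeasurable (hrot θ).fst.aestronglyMeasurable).prodMk
        (hrot θ).snd.aestronglyMeasurable)
  · exact (f' _).le_of_opNorm_le_of_le (hC _) (norm_snd_rotation_le _ θ)
  · exact (hf _).comp_hasDerivAt θ (hasDerivAt_fst_rotation _ θ)

end Rotation

section DotDual

variable {T : Type*} [Fintype T]

/-- The linear functional on `T → ℝ` with coefficients `a`; `HasFDerivAt f (dotDual a) x` says that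
`a` is the vector of partial derivatives of `f` at `x`. -/
noncomputable def dotDual (a : T → ℝ) : StrongDual ℝ (T → ℝ) :=
  ∑ i, a i • ContinuousLinearMap.proj (R := ℝ) (φ := fun _ ↦ ℝ) i

theorem dotDual_apply (a x : T → ℝ) : dotDual a x = ∑ i, a i * x i := by
  simp [dotDual]

theorem norm_dotDual_le (a : T → ℝ) : ‖dotDual a‖ ≤ ∑ i, |a i| := by
  refine ContinuousLinearMap.opNorm_le_bound _ (Finset.sum_nonneg fun i _ ↦ abs_nonneg _) fun x ↦ ?_
  rw [dotDual_apply, Finset.sum_mul]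
  refine norm_sum_le_of_le _ fun i _ ↦ ?_
  rw [norm_mul, Real.norm_eq_abs]
  exact mul_le_mul_of_nonneg_left (norm_le_pi_norm x i) (abs_nonneg _)

theorem continuous_dotDual : Continuous (dotDual (T := T)) :=
  continuous_finsetSum _ fun i _ ↦ (continuous_apply i).smul continuous_const

theorem exists_eq_dotDual (L : StrongDual ℝ (T → ℝ)) : ∃ a, L = dotDual a := by
  classical
  refine ⟨fun i ↦ L fun j ↦ if i = j then 1 else 0, ContinuousLinearMap.ext fun x ↦ ?_⟩
  rw [dotDual_apply]
  exact ((L : (T → ℝ) →ₗ[ℝ] ℝ).pi_apply_eq_sum_univ x).trans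
    (Finset.sum_congr rfl fun i _ ↦ mul_comm _ _)

end DotDual

section Covariance

variable {Ω T : Type*} {mΩ : MeasurableSpace Ω} {P : Measure Ω} [IsFiniteMeasure P]
  {X Y : Ω → T → ℝ}

theorem covariance_strongDual_comp_right [Finite T] {ξ : Ω → ℝ} (hξ : MemLp ξ 2 P)
    (hX : ∀ j, MemLp (X · j) 2 P) (L : StrongDual ℝ (T → ℝ)) :
    cov[ξ, fun ω ↦ L (X ω); P] = L fun j ↦ cov[ξ, (X · j); P] := by
  have := Fintype.ofFinite T
  obtain ⟨a, rfl⟩ := exists_eq_dotDual L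
  simp only [dotDual_apply]
  rw [covariance_fun_sum_right (fun j ↦ (hX j).const_mul _) hξ]
  simp only [covariance_const_mul_right]

theorem covariance_snd_fst_rotation [Fintype T]
    (hX : ∀ t, MemLp (X · t) 2 P) (hY : ∀ t, MemLp (Y · t) 2 P)
    (hXY : X ⟂ᵢ[P] Y) (θ : ℝ) (i j : T) :
    cov[fun ω ↦ (ContinuousLinearMap.rotation θ (X ω, Y ω)).2 i,
        fun ω ↦ (ContinuousLinearMap.rotation θ (X ω, Y ω)).1 j; P]
      = Real.sin θ * Real.cos θ * (cov[(Y · i), (Y · j); P] - cov[(X · i), (X · j); P]) := by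
  have hcross (i j : T) : cov[(X · i), (Y · j); P] = 0 :=
    (hXY.comp (measurable_pi_apply i) (measurable_pi_apply j)).covariance_eq_zero (hX i) (hY j)
  simp only [ContinuousLinearMap.rotation_apply, Pi.add_apply, Pi.smul_apply, smul_eq_mul]
  rw [← Pi.add_def, ← Pi.add_def,
    covariance_add_left ((hX i).const_mul _) ((hY i).const_mul _)
      (((hX j).const_mul _).add ((hY j).const_mul _)),
    covariance_add_right ((hX i).const_mul _) ((hX j).const_mul _) ((hY j).const_mul _),
    covariance_add_right ((hY i).const_mul _) ((hX j).const_mul _) ((hY j).const_mul _)]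
  simp only [covariance_const_mul_left, covariance_const_mul_right, hcross,
    covariance_comm (Y · i) (X · j)]
  ring

end Covariance

section GradHess

variable {T : Type*} [Fintype T]

/-- `f` is twice differentiable with bounded gradient `grad` and bounded continuous Hessian matrix
`hess`. -/
structure HasBoundedGradHess (f : (T → ℝ) → ℝ) (grad : (T → ℝ) → T → ℝ)
    (hess : (T → ℝ) → T → T → ℝ) : Prop where
  hasFDerivAt (x : T → ℝ) : HasFDerivAt f (dotDual (grad x)) x
  hasFDerivAt_grad (x : T → ℝ) (i : T) : HasFDerivAt (grad · i) (dotDual (hess x i)) x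
  continuous_hess : Continuous hess
  exists_abs_grad_le : ∃ C, ∀ x i, |grad x i| ≤ C
  exists_abs_hess_le : ∃ C, ∀ x i j, |hess x i j| ≤ C

namespace HasBoundedGradHess

variable {f : (T → ℝ) → ℝ} {grad : (T → ℝ) → T → ℝ} {hess : (T → ℝ) → T → T → ℝ}

theorem comp_add_const (hf : HasBoundedGradHess f grad hess) (m : T → ℝ) :
    HasBoundedGradHess (fun x ↦ f (x + m)) (fun x ↦ grad (x + m)) (fun x ↦ hess (x + m)) where
  hasFDerivAt x := (hasFDerivAt_comp_add_right m).2 (hf.hasFDerivAt (x + m))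
  hasFDerivAt_grad x i := (hasFDerivAt_comp_add_right m).2 (hf.hasFDerivAt_grad (x + m) i)
  continuous_hess := hf.continuous_hess.comp (continuous_add_const m)
  exists_abs_grad_le := hf.exists_abs_grad_le.imp fun _ hC x ↦ hC (x + m)
  exists_abs_hess_le := hf.exists_abs_hess_le.imp fun _ hC x ↦ hC (x + m)

theorem continuous_grad (hf : HasBoundedGradHess f grad hess) : Continuous grad :=
  continuous_pi fun i ↦ continuous_iff_continuousAt.2 fun x ↦
    (hf.hasFDerivAt_grad x i).continuousAt

theorem exists_norm_dotDual_grad_le (hf : HasBoundedGradHess f grad hess) :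
    ∃ C, ∀ x, ‖dotDual (grad x)‖ ≤ C :=
  have ⟨C, hC⟩ := hf.exists_abs_grad_le
  ⟨∑ _ : T, C, fun x ↦ (norm_dotDual_le _).trans (Finset.sum_le_sum fun i _ ↦ hC x i)⟩

theorem integrable_comp {Ω : Type*} [MeasurableSpace Ω] {P : Measure Ω} [IsFiniteMeasure P]
    {X : Ω → T → ℝ} (hf : HasBoundedGradHess f grad hess) (hX : Integrable X P) :
    Integrable (fun ω ↦ f (X ω)) P :=
  have ⟨_, hC⟩ := hf.exists_norm_dotDual_grad_le
  integrable_comp_of_hasFDerivAt hf.hasFDerivAt hC hX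

end HasBoundedGradHess

end GradHess

section Interpolation

variable {Ω T : Type*} [Fintype T] {mΩ : MeasurableSpace Ω} {P : Measure Ω}

open ContinuousLinearMap (rotation)

theorem integral_sub_mul_comp_pi {ξ : Ω → ℝ} {Z : Ω → T → ℝ} {g : (T → ℝ) → ℝ}
    {g' : (T → ℝ) → T → ℝ} {B B' : ℝ} (hξZ : HasGaussianLaw (fun ω ↦ (ξ ω, Z ω)) P)
    (hderiv : ∀ x, HasFDerivAt g (dotDual (g' x)) x) (hg' : Continuous g')
    (hB : ∀ x, |g x| ≤ B) (hB' : ∀ x j, |g' x j| ≤ B') :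
    ∫ ω, (ξ ω - P[ξ]) * g (Z ω) ∂P = ∑ j, cov[ξ, (Z · j); P] * ∫ ω, g' (Z ω) j ∂P := by
  have := hξZ.isProbabilityMeasure
  have hZ : AEMeasurable Z P := hξZ.snd.aemeasurable
  have hg : Continuous g := continuous_iff_continuousAt.2 fun x ↦ (hderiv x).continuousAt
  have hgZ : AEStronglyMeasurable (fun ω ↦ g (Z ω)) P :=
    (hg.measurable.comp_aemeasurable hZ).aestronglyMeasurable
  have hint' (j : T) : Integrable (fun ω ↦ g' (Z ω) j) P :=
    .of_bound (((continuous_apply j).comp hg').measurable.comp_aemeasurable hZ).aestronglyMeasurable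
      B' (ae_of_all _ fun ω ↦ hB' (Z ω) j)
  set k : T → ℝ := fun j ↦ cov[ξ, (Z · j); P]
  have hparts : ∫ ω, (ξ ω - P[ξ]) * g (Z ω) ∂P = ∫ ω, dotDual (g' (Z ω)) k ∂P :=
    integral_sub_mul_comp hξZ
      (fun L ↦ covariance_strongDual_comp_right hξZ.fst.memLp_two
        (fun j ↦ (hξZ.snd.eval j).memLp_two) L)
      (fun x ↦ (hderiv x).hasLineDerivAt k) hg.measurable
      ((continuous_dotDual.comp hg').clm_apply continuous_const).measurable
      (.of_bound hgZ B (ae_of_all _ fun ω ↦ hB (Z ω)))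
      (by simpa only [dotDual_apply] using
        integrable_finsetSum _ fun j _ ↦ (hint' j).mul_const (k j))
      ((hξZ.fst.integrable.sub (integrable_const _)).mul_bdd hgZ (ae_of_all _ fun ω ↦ hB (Z ω)))
  simp only [hparts, dotDual_apply]
  rw [integral_finsetSum _ fun j _ ↦ (hint' j).mul_const (k j)]
  exact Finset.sum_congr rfl fun j _ ↦ (integral_mul_const _ _).trans (mul_comm _ _)

variable {f : (T → ℝ) → ℝ} {grad : (T → ℝ) → T → ℝ} {hess : (T → ℝ) → T → T → ℝ}

theorem HasBoundedGradHess.integral_dotDual_grad {V Z : Ω → T → ℝ}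
    (hf : HasBoundedGradHess f grad hess) (hZV : HasGaussianLaw (fun ω ↦ (Z ω, V ω)) P)
    (hV : ∀ i, ∫ ω, V ω i ∂P = 0) :
    ∫ ω, dotDual (grad (Z ω)) (V ω) ∂P
      = ∑ i, ∑ j, cov[(V · i), (Z · j); P] * ∫ ω, hess (Z ω) i j ∂P := by
  obtain ⟨C, hC⟩ := hf.exists_abs_grad_le
  obtain ⟨C', hC'⟩ := hf.exists_abs_hess_le
  have hparts (i : T) : ∫ ω, grad (Z ω) i * V ω i ∂P
      = ∑ j, cov[(V · i), (Z · j); P] * ∫ ω, hess (Z ω) i j ∂P := by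
    have hjoint : HasGaussianLaw (fun ω ↦ (V ω i, Z ω)) P :=
      hZV.map_fun (((ContinuousLinearMap.proj i).comp (.snd ℝ (T → ℝ) (T → ℝ))).prod (.fst ℝ _ _))
    rw [← integral_sub_mul_comp_pi hjoint (fun x ↦ hf.hasFDerivAt_grad x i)
      ((continuous_apply i).comp hf.continuous_hess) (fun x ↦ hC x i) (fun x ↦ hC' x i)]
    simp only [hV, sub_zero, mul_comm]
  have hint (i : T) : Integrable (fun ω ↦ grad (Z ω) i * V ω i) P :=
    (hZV.snd.eval i).integrable.bdd_mul
      (((continuous_apply i).comp hf.continuous_grad).measurable.comp_aemeasurable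
        hZV.fst.aemeasurable).aestronglyMeasurable (ae_of_all _ fun ω ↦ hC (Z ω) i)
  simp only [dotDual_apply]
  rw [integral_finsetSum _ fun i _ ↦ hint i]
  exact Finset.sum_congr rfl fun i _ ↦ hparts i

theorem HasBoundedGradHess.hasDerivAt_integral_comp_rotation_of_indepFun {X Y : Ω → T → ℝ}
    (hf : HasBoundedGradHess f grad hess) (hX : HasGaussianLaw X P) (hY : HasGaussianLaw Y P)
    (hXY : X ⟂ᵢ[P] Y) (hX₀ : ∀ t, ∫ ω, X ω t ∂P = 0) (hY₀ : ∀ t, ∫ ω, Y ω t ∂P = 0) (θ : ℝ) :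
    HasDerivAt (fun θ ↦ ∫ ω, f (rotation θ (X ω, Y ω)).1 ∂P)
      (Real.sin θ * Real.cos θ * ∑ i, ∑ j, (cov[(Y · i), (Y · j); P] - cov[(X · i), (X · j); P])
        * ∫ ω, hess (rotation θ (X ω, Y ω)).1 i j ∂P) θ := by
  have := hX.isProbabilityMeasure
  obtain ⟨D, hD⟩ := hf.exists_norm_dotDual_grad_le
  refine (hasDerivAt_integral_comp_rotation hf.hasFDerivAt
    (continuous_dotDual.comp hf.continuous_grad) hD hX.integrable hY.integrable θ).congr_deriv ?_
  have hrot : HasGaussianLaw (fun ω ↦ rotation θ (X ω, Y ω)) P :=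
    (hXY.hasGaussianLaw hX hY).map_fun (rotation θ)
  have hcentered (i : T) : ∫ ω, (rotation θ (X ω, Y ω)).2 i ∂P = 0 := by
    simp only [ContinuousLinearMap.rotation_apply, Pi.add_apply, Pi.smul_apply, smul_eq_mul]
    rw [integral_add ((hX.eval i).integrable.const_mul _) ((hY.eval i).integrable.const_mul _)]
    simp only [integral_const_mul, hX₀, hY₀, mul_zero, add_zero]
  rw [hf.integral_dotDual_grad (V := fun ω ↦ (rotation θ (X ω, Y ω)).2)
    (Z := fun ω ↦ (rotation θ (X ω, Y ω)).1) hrot hcentered]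
  simp only [covariance_snd_fst_rotation (fun t ↦ (hX.eval t).memLp_two)
    (fun t ↦ (hY.eval t).memLp_two) hXY, Finset.mul_sum, mul_assoc]

end Interpolation

section HasGaussianLaw

variable {Ω Ω' E : Type*} {mΩ : MeasurableSpace Ω} {mΩ' : MeasurableSpace Ω'} {P : Measure Ω}
  [NormedAddCommGroup E] [NormedSpace ℝ E] [MeasurableSpace E] {X : Ω → E}

theorem hasGaussianLaw_comp_of_hasLaw {Q : Measure Ω'} {φ : Ω' → Ω} (hX : HasGaussianLaw X P)
    (hφ : HasLaw φ P Q) : HasGaussianLaw (fun ω ↦ X (φ ω)) Q :=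
  have := hX.isGaussian_map
  (HasLaw.fun_comp ⟨hX.aemeasurable, rfl⟩ hφ).hasGaussianLaw

theorem hasGaussianLaw_sub_const [BorelSpace E] [SecondCountableTopology E]
    (hX : HasGaussianLaw X P) (m : E) : HasGaussianLaw (fun ω ↦ X ω - m) P :=
  have := hX.isGaussian_map
  have hsub : HasLaw (· - m) ((P.map X).map (· - m)) (P.map X) := ⟨by fun_prop, rfl⟩
  (hsub.fun_comp ⟨hX.aemeasurable, rfl⟩).hasGaussianLaw

end HasGaussianLaw

section Comparison

variable {Ω Ω' T : Type*} [Fintype T] {mΩ : MeasurableSpace Ω} {mΩ' : MeasurableSpace Ω'}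
  {P : Measure Ω} {P' : Measure Ω'} {f : (T → ℝ) → ℝ} {grad : (T → ℝ) → T → ℝ}
  {hess : (T → ℝ) → T → T → ℝ}

namespace HasBoundedGradHess

open ContinuousLinearMap (rotation)

theorem integrable_hess_comp [IsFiniteMeasure P] {Z : Ω → T → ℝ}
    (hf : HasBoundedGradHess f grad hess) (hZ : AEMeasurable Z P) (i j : T) :
    Integrable (fun ω ↦ hess (Z ω) i j) P :=
  have ⟨C, hC⟩ := hf.exists_abs_hess_le
  have hcont : Continuous fun x ↦ hess x i j :=
    (continuous_apply_apply i j).comp hf.continuous_hess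
  .of_bound (hcont.measurable.comp_aemeasurable hZ).aestronglyMeasurable C
    (ae_of_all _ fun ω ↦ hC (Z ω) i j)

theorem sum_mul_integral_hess_nonneg [IsFiniteMeasure P] {Z : Ω → T → ℝ} {c : T → T → ℝ}
    (hf : HasBoundedGradHess f grad hess) (hZ : AEMeasurable Z P)
    (hc : ∀ x, 0 ≤ ∑ i, ∑ j, c i j * hess x i j) :
    0 ≤ ∑ i, ∑ j, c i j * ∫ ω, hess (Z ω) i j ∂P := by
  have hint (i j : T) : Integrable (fun ω ↦ c i j * hess (Z ω) i j) P :=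
    (hf.integrable_hess_comp hZ i j).const_mul _
  have hswap : ∑ i, ∑ j, c i j * ∫ ω, hess (Z ω) i j ∂P
      = ∫ ω, ∑ i, ∑ j, c i j * hess (Z ω) i j ∂P := by
    rw [integral_finsetSum _ fun i _ ↦ integrable_finsetSum _ fun j _ ↦ hint i j]
    refine Finset.sum_congr rfl fun i _ ↦ ?_
    rw [integral_finsetSum _ fun j _ ↦ hint i j]
    simp only [integral_const_mul]
  exact hswap ▸ integral_nonneg fun ω ↦ hc (Z ω)

theorem integral_comp_le_of_indepFun {X Y : Ω → T → ℝ} (hf : HasBoundedGradHess f grad hess)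
    (hX : HasGaussianLaw X P) (hY : HasGaussianLaw Y P) (hXY : X ⟂ᵢ[P] Y)
    (hX₀ : ∀ t, ∫ ω, X ω t ∂P = 0) (hY₀ : ∀ t, ∫ ω, Y ω t ∂P = 0)
    (hcov : ∀ x, 0 ≤ ∑ i, ∑ j, (cov[(Y · i), (Y · j); P] - cov[(X · i), (X · j); P]) * hess x i j) :
    ∫ ω, f (X ω) ∂P ≤ ∫ ω, f (Y ω) ∂P := by
  have := hX.isProbabilityMeasure
  have hderiv := hf.hasDerivAt_integral_comp_rotation_of_indepFun hX hY hXY hX₀ hY₀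
  have hmono : MonotoneOn (fun θ ↦ ∫ ω, f (rotation θ (X ω, Y ω)).1 ∂P)
      (Set.Icc 0 (Real.pi / 2)) := by
    refine monotoneOn_of_deriv_nonneg (convex_Icc _ _)
      (fun θ _ ↦ (hderiv θ).continuousAt.continuousWithinAt)
      (fun θ _ ↦ (hderiv θ).differentiableAt.differentiableWithinAt) fun θ hθ ↦ ?_
    obtain ⟨hθ₀, hθ₁⟩ := interior_subset hθ
    have hrot : AEMeasurable (fun ω ↦ (rotation θ (X ω, Y ω)).1) P :=
      ((hXY.hasGaussianLaw hX hY).map_fun (rotation θ)).fst.aemeasurable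
    rw [(hderiv θ).deriv]
    refine mul_nonneg (mul_nonneg ?_ ?_) (hf.sum_mul_integral_hess_nonneg hrot hcov)
    · exact Real.sin_nonneg_of_nonneg_of_le_pi hθ₀ (by linarith [Real.pi_pos])
    · exact Real.cos_nonneg_of_mem_Icc ⟨by linarith [Real.pi_pos], hθ₁⟩
  have hpi : 0 ≤ Real.pi / 2 := Real.pi_div_two_pos.le
  simpa only [ContinuousLinearMap.rotation_apply, Real.cos_zero, Real.sin_zero, Real.cos_pi_div_two,
    Real.sin_pi_div_two, one_smul, zero_smul, add_zero, zero_add]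
    using hmono (Set.left_mem_Icc.2 hpi) (Set.right_mem_Icc.2 hpi) hpi

theorem integral_comp_le_of_integral_eq_zero {X : Ω → T → ℝ} {Y : Ω' → T → ℝ}
    (hf : HasBoundedGradHess f grad hess) (hX : HasGaussianLaw X P) (hY : HasGaussianLaw Y P')
    (hX₀ : ∀ t, ∫ ω, X ω t ∂P = 0) (hY₀ : ∀ t, ∫ ω, Y ω t ∂P' = 0)
    (hcov : ∀ x, 0 ≤
      ∑ i, ∑ j, (cov[(Y · i), (Y · j); P'] - cov[(X · i), (X · j); P]) * hess x i j) :
    ∫ ω, f (X ω) ∂P ≤ ∫ ω, f (Y ω) ∂P' := by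
  have := hX.isProbabilityMeasure
  have := hY.isProbabilityMeasure
  have hfst : HasLaw Prod.fst P (P.prod P') := measurePreserving_fst.hasLaw
  have hsnd : HasLaw Prod.snd P' (P.prod P') := measurePreserving_snd.hasLaw
  have hX' : HasGaussianLaw (fun p : Ω × Ω' ↦ X p.1) (P.prod P') :=
    hasGaussianLaw_comp_of_hasLaw hX hfst
  have hY' : HasGaussianLaw (fun p : Ω × Ω' ↦ Y p.2) (P.prod P') :=
    hasGaussianLaw_comp_of_hasLaw hY hsnd
  have hle := hf.integral_comp_le_of_indepFun hX' hY'
    (indepFun_prod₀ hX.aemeasurable hY.aemeasurable)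
    (fun t ↦ by simpa [hX₀] using integral_fun_fst (μ := P) (ν := P') (X · t))
    (fun t ↦ by simpa [hY₀] using integral_fun_snd (μ := P) (ν := P') (Y · t)) fun x ↦ by
      have hcovX (i j : T) := hfst.covariance_fun_comp
        (hX.eval i).aemeasurable (hX.eval j).aemeasurable
      have hcovY (i j : T) := hsnd.covariance_fun_comp
        (hY.eval i).aemeasurable (hY.eval j).aemeasurable
      simpa only [hcovX, hcovY] using hcov x
  rwa [integral_fun_fst fun ω ↦ f (X ω), integral_fun_snd fun ω ↦ f (Y ω), probReal_univ,
    probReal_univ, one_smul, one_smul] at hle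

theorem integral_comp_le {X : Ω → T → ℝ} {Y : Ω' → T → ℝ}
    (hf : HasBoundedGradHess f grad hess) (hX : HasGaussianLaw X P) (hY : HasGaussianLaw Y P')
    (hmean : ∀ t, ∫ ω, X ω t ∂P = ∫ ω, Y ω t ∂P')
    (hcov : ∀ x, 0 ≤
      ∑ i, ∑ j, (cov[(Y · i), (Y · j); P'] - cov[(X · i), (X · j); P]) * hess x i j) :
    ∫ ω, f (X ω) ∂P ≤ ∫ ω, f (Y ω) ∂P' := by
  have := hX.isProbabilityMeasure
  have := hY.isProbabilityMeasure
  let m (t : T) : ℝ := ∫ ω, X ω t ∂P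
  have hXt (t : T) : Integrable (X · t) P := (hX.eval t).integrable
  have hYt (t : T) : Integrable (Y · t) P' := (hY.eval t).integrable
  have hle := (hf.comp_add_const m).integral_comp_le_of_integral_eq_zero
    (hasGaussianLaw_sub_const hX m) (hasGaussianLaw_sub_const hY m)
    (fun t ↦ by simpa [m] using integral_sub (hXt t) (integrable_const (m t)))
    (fun t ↦ by simpa [m, hmean] using integral_sub (hYt t) (integrable_const (m t))) fun x ↦ by
      simpa only [Pi.sub_apply, covariance_sub_const_left, covariance_sub_const_right, hXt, hYt]
        using hcov (x + m)
  simpa only [sub_add_cancel] using hle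

end HasBoundedGradHess

end Comparison

section LogSumExp

variable {T : Type*} [Fintype T] {β : ℝ}

/-- The log-sum-exp function `β⁻¹ log ∑ᵢ exp (β zᵢ)` at inverse temperature `β`, a smooth
approximation of `⨆ i, z i` as `β → ∞`. -/
noncomputable def logSumExp (β : ℝ) (z : T → ℝ) : ℝ :=
  β⁻¹ * Real.log (∑ i, Real.exp (β * z i))

/-- The Gibbs weights of `z` at inverse temperature `β`, which form the gradient of
`logSumExp β`. -/
noncomputable def softmax (β : ℝ) (z : T → ℝ) (i : T) : ℝ :=
  Real.exp (β * z i) / ∑ j, Real.exp (β * z j)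

theorem softmax_nonneg (β : ℝ) (z : T → ℝ) (i : T) : 0 ≤ softmax β z i :=
  div_nonneg (Real.exp_pos _).le (Finset.sum_nonneg fun _ _ ↦ (Real.exp_pos _).le)

theorem softmax_le_one (β : ℝ) (z : T → ℝ) (i : T) : softmax β z i ≤ 1 :=
  div_le_one_of_le₀ (Finset.single_le_sum (f := fun i ↦ Real.exp (β * z i))
    (fun _ _ ↦ (Real.exp_pos _).le) (Finset.mem_univ i))
    (Finset.sum_nonneg fun _ _ ↦ (Real.exp_pos _).le)

theorem abs_softmax_le_one (β : ℝ) (z : T → ℝ) (i : T) : |softmax β z i| ≤ 1 :=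
  (abs_of_nonneg (softmax_nonneg β z i)).trans_le (softmax_le_one β z i)

theorem sum_exp_pos [Nonempty T] (β : ℝ) (z : T → ℝ) : 0 < ∑ i, Real.exp (β * z i) :=
  Finset.sum_pos (fun _ _ ↦ Real.exp_pos _) Finset.univ_nonempty

theorem sum_softmax [Nonempty T] (β : ℝ) (z : T → ℝ) : ∑ i, softmax β z i = 1 := by
  simp only [softmax, ← Finset.sum_div]
  exact div_self (sum_exp_pos β z).ne'

theorem hasFDerivAt_sum_exp [Nonempty T] (β : ℝ) (z : T → ℝ) :
    HasFDerivAt (fun z : T → ℝ ↦ ∑ i, Real.exp (β * z i))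
      (((∑ i, Real.exp (β * z i)) * β) • dotDual (softmax β z)) z := by
  refine (HasFDerivAt.fun_sum fun i _ ↦ ((hasFDerivAt_apply i z).const_mul β).exp).congr_fderiv ?_
  have := (sum_exp_pos β z).ne'
  rw [dotDual, Finset.smul_sum]
  refine Finset.sum_congr rfl fun i _ ↦ ?_
  rw [smul_smul, smul_smul, softmax]
  congr 1
  field_simp

theorem hasFDerivAt_logSumExp [Nonempty T] (hβ : β ≠ 0) (z : T → ℝ) :
    HasFDerivAt (logSumExp β) (dotDual (softmax β z)) z := by
  refine (((hasFDerivAt_sum_exp β z).log (sum_exp_pos β z).ne').const_mul β⁻¹).congr_fderiv ?_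
  have := (sum_exp_pos β z).ne'
  rw [smul_smul, smul_smul]
  convert one_smul ℝ _
  field_simp

theorem softmax_eq_exp [Nonempty T] (hβ : β ≠ 0) (z : T → ℝ) (i : T) :
    softmax β z i = Real.exp (β * (z i - logSumExp β z)) := by
  rw [softmax, logSumExp, mul_sub, mul_inv_cancel_left₀ hβ, Real.exp_sub,
    Real.exp_log (sum_exp_pos β z)]

theorem hasFDerivAt_softmax [Nonempty T] (hβ : β ≠ 0) (z : T → ℝ) (i : T) :
    HasFDerivAt (softmax β · i) ((β * softmax β z i) •
      (ContinuousLinearMap.proj (R := ℝ) (φ := fun _ ↦ ℝ) i - dotDual (softmax β z))) z := by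
  simp only [softmax_eq_exp hβ _ i]
  rw [mul_comm β, mul_smul]
  exact (((hasFDerivAt_apply i z).fun_sub (hasFDerivAt_logSumExp hβ z)).const_mul β).exp

theorem hasBoundedGradHess_logSumExp [DecidableEq T] [Nonempty T] (hβ : β ≠ 0) :
    HasBoundedGradHess (logSumExp (T := T) β) (softmax β)
      fun z i j ↦ β * softmax β z i * ((if i = j then 1 else 0) - softmax β z j) where
  hasFDerivAt := hasFDerivAt_logSumExp hβ
  hasFDerivAt_grad z i := (hasFDerivAt_softmax hβ z i).congr_fderiv <| by
    ext x
    simp [dotDual_apply, mul_sub, sub_mul, Finset.mul_sum, mul_assoc]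
  continuous_hess := by
    have hcont (i : T) : Continuous fun z : T → ℝ ↦ softmax β z i :=
      continuous_iff_continuousAt.2 fun z ↦ (hasFDerivAt_softmax hβ z i).continuousAt
    fun_prop
  exists_abs_grad_le := ⟨1, abs_softmax_le_one β⟩
  exists_abs_hess_le := by
    refine ⟨|β| * 1 * 1, fun z i j ↦ ?_⟩
    rw [abs_mul, abs_mul]
    gcongr
    · exact abs_softmax_le_one β z i
    · have := softmax_nonneg β z j
      have := softmax_le_one β z j
      rw [abs_le]
      split_ifs <;> constructor <;> linarith

theorem sum_mul_hess_logSumExp [DecidableEq T] {w : T → ℝ} (hw : ∑ i, w i = 1) (β : ℝ)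
    (c : T → T → ℝ) :
    ∑ i, ∑ j, c i j * (β * w i * ((if i = j then 1 else 0) - w j))
      = β / 2 * ∑ i, ∑ j, w i * w j * (c i i + c j j - 2 * c i j) := by
  have hdiag : ∑ i, ∑ j, w i * w j * c i i = ∑ i, w i * c i i :=
    Finset.sum_congr rfl fun i _ ↦ by
      rw [← Finset.sum_mul, ← Finset.mul_sum, hw, mul_one]
  have hdiag' : ∑ i, ∑ j, w i * w j * c j j = ∑ i, w i * c i i := by
    rw [Finset.sum_comm, ← hdiag]
    exact Finset.sum_congr rfl fun i _ ↦ Finset.sum_congr rfl fun j _ ↦ by rw [mul_comm (w j)]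
  have hleft (i : T) : ∑ j, c i j * (β * w i * ((if i = j then 1 else 0) - w j))
      = β * (w i * c i i - ∑ j, w i * w j * c i j) := by
    simp only [mul_sub, Finset.sum_sub_distrib, Finset.mul_sum, mul_ite, mul_one, mul_zero,
      Finset.sum_ite_eq, Finset.mem_univ, if_true]
    congr 1
    · ring
    · exact Finset.sum_congr rfl fun j _ ↦ by ring
  have hright : ∑ i, ∑ j, w i * w j * (c i i + c j j - 2 * c i j)
      = 2 * ∑ i, (w i * c i i - ∑ j, w i * w j * c i j) := by
    simp only [mul_sub, mul_add, Finset.sum_sub_distrib, Finset.sum_add_distrib, hdiag, hdiag',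
      mul_left_comm _ (2 : ℝ), ← Finset.mul_sum]
    ring
  simp only [hleft, hright, ← Finset.mul_sum]
  ring

theorem iSup_le_logSumExp [Nonempty T] (hβ : 0 < β) (z : T → ℝ) :
    ⨆ i, z i ≤ logSumExp β z := by
  refine ciSup_le fun i ↦ ?_
  rw [logSumExp, inv_mul_eq_div, le_div_iff₀ hβ, Real.le_log_iff_exp_le (sum_exp_pos β z),
    mul_comm]
  exact Finset.single_le_sum (f := fun i ↦ Real.exp (β * z i)) (fun _ _ ↦ (Real.exp_pos _).le)
    (Finset.mem_univ i)

theorem logSumExp_le_iSup_add [Nonempty T] (hβ : 0 < β) (z : T → ℝ) :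
    logSumExp β z ≤ (⨆ i, z i) + Real.log (Fintype.card T) / β := by
  have hcard : (Fintype.card T : ℝ) ≠ 0 := Nat.cast_ne_zero.2 Fintype.card_ne_zero
  have hsum : ∑ i, Real.exp (β * z i) ≤ Fintype.card T * Real.exp (β * ⨆ i, z i) := by
    rw [← nsmul_eq_mul]
    refine Finset.sum_le_card_nsmul _ _ _ fun i _ ↦ ?_
    gcongr
    exact le_ciSup (Set.finite_range z).bddAbove i
  rw [logSumExp, inv_mul_eq_div, ← sub_le_iff_le_add, ← sub_div, div_le_iff₀ hβ, sub_le_iff_le_add]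
  calc Real.log (∑ i, Real.exp (β * z i))
      ≤ Real.log (Fintype.card T * Real.exp (β * ⨆ i, z i)) :=
        Real.log_le_log (sum_exp_pos β z) hsum
    _ = (⨆ i, z i) * β + Real.log (Fintype.card T) := by
        rw [Real.log_mul hcard (Real.exp_pos _).ne', Real.log_exp, add_comm, mul_comm]

theorem abs_iSup_le_norm [Nonempty T] (z : T → ℝ) : |⨆ i, z i| ≤ ‖z‖ :=
  have ⟨i, hi⟩ := exists_eq_ciSup_of_finite (f := z)
  hi ▸ norm_le_pi_norm z i

end LogSumExp

section ISup

variable {Ω Ω' T : Type*} {mΩ : MeasurableSpace Ω} {mΩ' : MeasurableSpace Ω'}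
  {P : Measure Ω} {P' : Measure Ω'}

theorem variance_fun_sub_eq_covariance [IsFiniteMeasure P] {X Y : Ω → ℝ} (hX : MemLp X 2 P)
    (hY : MemLp Y 2 P) :
    Var[fun ω ↦ X ω - Y ω; P] = cov[X, X; P] + cov[Y, Y; P] - 2 * cov[X, Y; P] := by
  rw [variance_fun_sub hX hY, covariance_self hX.aemeasurable, covariance_self hY.aemeasurable]
  ring

theorem integrable_iSup [Finite T] [Nonempty T] {X : Ω → T → ℝ} (hX : ∀ t, Integrable (X · t) P) :
    Integrable (fun ω ↦ ⨆ t, X ω t) P := by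
  have := Fintype.ofFinite T
  exact (Integrable.of_eval hX).norm.mono'
    (AEMeasurable.iSup fun t ↦ (hX t).aemeasurable).aestronglyMeasurable
    (ae_of_all _ fun ω ↦ abs_iSup_le_norm (X ω))

variable [Fintype T] [Nonempty T] {X : Ω → T → ℝ} {Y : Ω' → T → ℝ}

theorem integral_logSumExp_le {β : ℝ} (hβ : 0 < β) (hX : HasGaussianLaw X P)
    (hY : HasGaussianLaw Y P') (hmean : ∀ t, ∫ ω, X ω t ∂P = ∫ ω, Y ω t ∂P')
    (hincr : ∀ s t, Var[fun ω ↦ X ω s - X ω t; P] ≤ Var[fun ω ↦ Y ω s - Y ω t; P']) :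
    ∫ ω, logSumExp β (X ω) ∂P ≤ ∫ ω, logSumExp β (Y ω) ∂P' := by
  classical
  have := hX.isProbabilityMeasure
  have := hY.isProbabilityMeasure
  refine (hasBoundedGradHess_logSumExp hβ.ne').integral_comp_le hX hY hmean fun z ↦ ?_
  rw [sum_mul_hess_logSumExp (sum_softmax β z)]
  refine mul_nonneg (half_pos hβ).le (Finset.sum_nonneg fun i _ ↦ Finset.sum_nonneg fun j _ ↦
    mul_nonneg (mul_nonneg (softmax_nonneg β z i) (softmax_nonneg β z j)) ?_)
  have hij := hincr i j
  rw [variance_fun_sub_eq_covariance (hX.eval i).memLp_two (hX.eval j).memLp_two,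
    variance_fun_sub_eq_covariance (hY.eval i).memLp_two (hY.eval j).memLp_two] at hij
  linarith

theorem integral_iSup_le_add (hX : HasGaussianLaw X P) (hY : HasGaussianLaw Y P')
    (hmean : ∀ t, ∫ ω, X ω t ∂P = ∫ ω, Y ω t ∂P')
    (hincr : ∀ s t, Var[fun ω ↦ X ω s - X ω t; P] ≤ Var[fun ω ↦ Y ω s - Y ω t; P'])
    {β : ℝ} (hβ : 0 < β) :
    ∫ ω, ⨆ t, X ω t ∂P ≤ ∫ ω, ⨆ t, Y ω t ∂P' + Real.log (Fintype.card T) / β := by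
  classical
  have := hX.isProbabilityMeasure
  have := hY.isProbabilityMeasure
  have hsmooth := hasBoundedGradHess_logSumExp (T := T) hβ.ne'
  have hiSup : Integrable (fun ω ↦ ⨆ t, Y ω t) P' :=
    integrable_iSup fun t ↦ (hY.eval t).integrable
  calc ∫ ω, ⨆ t, X ω t ∂P
      ≤ ∫ ω, logSumExp β (X ω) ∂P :=
        integral_mono (integrable_iSup fun t ↦ (hX.eval t).integrable)
          (hsmooth.integrable_comp hX.integrable) fun ω ↦ iSup_le_logSumExp hβ (X ω)
    _ ≤ ∫ ω, logSumExp β (Y ω) ∂P' := integral_logSumExp_le hβ hX hY hmean hincr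
    _ ≤ ∫ ω, ((⨆ t, Y ω t) + Real.log (Fintype.card T) / β) ∂P' :=
        integral_mono (hsmooth.integrable_comp hY.integrable) (hiSup.add (integrable_const _))
          fun ω ↦ logSumExp_le_iSup_add hβ (Y ω)
    _ = ∫ ω, ⨆ t, Y ω t ∂P' + Real.log (Fintype.card T) / β := by
        rw [integral_add hiSup (integrable_const _), integral_const, probReal_univ, one_smul]

end ISup

theorem sudakov_fernique_general {Ω Ω' T : Type*} [MeasurableSpace Ω] [MeasurableSpace Ω']
    {P : Measure Ω} {P' : Measure Ω'} [Finite T] [Nonempty T] {X : T → Ω → ℝ} {Y : T → Ω' → ℝ}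
    (hX : HasGaussianLaw (fun ω t ↦ X t ω) P) (hY : HasGaussianLaw (fun ω t ↦ Y t ω) P')
    (hmean : ∀ t, P[X t] = P'[Y t])
    (hincr : ∀ s t, Var[X t - X s; P] ≤ Var[Y t - Y s; P']) :
    ∫ ω, ⨆ t, X t ω ∂P ≤ ∫ ω, ⨆ t, Y t ω ∂P' := by
  have := Fintype.ofFinite T
  have hlim : Filter.Tendsto
      (fun β : ℝ ↦ ∫ ω, ⨆ t, Y t ω ∂P' + Real.log (Fintype.card T) / β) Filter.atTop
      (nhds (∫ ω, ⨆ t, Y t ω ∂P' + 0)) :=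
    (Filter.tendsto_id.const_div_atTop _).const_add _
  rw [add_zero] at hlim
  exact ge_of_tendsto hlim <| (Filter.eventually_gt_atTop 0).mono fun β hβ ↦
    integral_iSup_le_add hX hY hmean (fun s t ↦ hincr t s) hβ

namespace IsCenteredGaussianProcess

variable {Ω T : Type*} [MeasurableSpace Ω] {P : Measure Ω} [Fintype T] {X : T → Ω → ℝ}

theorem exists_map_strongDual_eq (hX : IsCenteredGaussianProcess P X) (L : StrongDual ℝ (T → ℝ)) :
    ∃ v : ℝ≥0, P.map (fun ω ↦ L fun t ↦ X t ω) = gaussianReal 0 v := by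
  obtain ⟨a, rfl⟩ := exists_eq_dotDual L
  simpa only [dotDual_apply] using hX a

theorem exists_hasLaw_eval (hX : IsCenteredGaussianProcess P X) (t : T) :
    ∃ v : ℝ≥0, HasLaw (X t) (gaussianReal 0 v) P :=
  have ⟨v, hv⟩ := hX.exists_map_strongDual_eq (.proj t)
  ⟨v, AEMeasurable.of_map_ne_zero (hv ▸ NeZero.ne _), hv⟩

theorem integral_eq_zero (hX : IsCenteredGaussianProcess P X) (t : T) : P[X t] = 0 :=
  have ⟨_, hv⟩ := hX.exists_hasLaw_eval t
  hv.integral_eq.trans integral_id_gaussianReal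

theorem hasGaussianLaw (hX : IsCenteredGaussianProcess P X) :
    HasGaussianLaw (fun ω t ↦ X t ω) P := by
  have hmeas : AEMeasurable (fun ω t ↦ X t ω) P :=
    aemeasurable_pi_lambda _ fun t ↦ (hX.exists_hasLaw_eval t).choose_spec.aemeasurable
  refine ⟨isGaussian_of_map_eq_gaussianReal fun L ↦ ⟨0, ?_⟩⟩
  obtain ⟨v, hv⟩ := hX.exists_map_strongDual_eq L
  exact ⟨v, hv ▸ AEMeasurable.map_map_of_aemeasurable L.continuous.aemeasurable hmeas⟩

theorem variance_sub (hX : IsCenteredGaussianProcess P X) (s t : T) :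
    Var[X t - X s; P] = ∫ ω, (X t ω - X s ω) ^ 2 ∂P := by
  have hlaw := hX.hasGaussianLaw
  refine variance_of_integral_eq_zero
    ((hlaw.eval t).aemeasurable.sub (hlaw.eval s).aemeasurable) ?_
  rw [integral_sub' (hlaw.eval t).integrable (hlaw.eval s).integrable, hX.integral_eq_zero,
    hX.integral_eq_zero, sub_zero]

end IsCenteredGaussianProcess

/-- The Sudakov–Fernique inequality for mean-zero Gaussian processes on a finite index set. -/
theorem sudakov_fernique {Ω : Type*} [MeasurableSpace Ω] (P : Measure Ω) [IsProbabilityMeasure P]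
    {T : Type*} [Fintype T] [Nonempty T] (X Y : T → Ω → ℝ)
    (hXm : ∀ t, Measurable (X t)) (hYm : ∀ t, Measurable (Y t))
    (hXg : IsCenteredGaussianProcess P X) (hYg : IsCenteredGaussianProcess P Y)
    (hincr : ∀ s t, ∫ ω, (X t ω - X s ω) ^ 2 ∂P ≤ ∫ ω, (Y t ω - Y s ω) ^ 2 ∂P) :
    ∫ ω, (⨆ t, X t ω) ∂P ≤ ∫ ω, (⨆ t, Y t ω) ∂P :=
  sudakov_fernique_general hXg.hasGaussianLaw hYg.hasGaussianLaw
    (fun t ↦ (hXg.integral_eq_zero t).trans (hYg.integral_eq_zero t).symm)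
    fun s t ↦ by simpa only [IsCenteredGaussianProcess.variance_sub, hXg, hYg] using hincr s t
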